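/- There exists a circle homeomorphism f with prescribed irrational rotation number ρ ∈ [0,1) such that f is piecewise C^∞, is a C^∞ diffeomorphism on S¹ \ {p} for a given point p, has p as a flat half-critical point (left derivative nonzero, all right derivatives vanish), and possesses a wandering interval; in particular f is not topologically conjugate to the rotation R_ρ. -/

import Mathlib

/-!
The lift is sought in the form `t + φ_w`, where `φ_w` is, on `[0,1]`, the normalised primitive of a
smooth density `w` vanishing on `(-∞, 0]` and positive on `(0,1]`. Vanishing to infinite order
at `0` makes all right derivatives at the marked point vanish, while the left derivative there is a
positive multiple of `w 1` (`Final` collects what is needed). Throughout the construction `t` is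
the smallest translation giving translation number `ρ` (`Dens.tt`); the maps so normalised depend
continuously on `w` (`Dens.tendsto_iter`).

The construction starts from densities vanishing on a whole interval `[0, b]`. If an iterate maps an
interval into `[0, b]` modulo the integers, it is collapsed by the next iterate, hence wanders
(`Dens.wand_of_collapse`). Wandering is encoded as a system of non-strict inequalities (`Wand`) and
so survives limits. One tries to shrink the flat interval to a shorter `[0, b']` by `C^N`-small
perturbations of `w` while still sending the fixed interval `[1/8, 3/8]` into it (`step`). The
perturbation first adds mass on `(b', a)`, keeping `[a, b]` collapsed. Two cases arise.

* Under some small perturbation the orbit of the collapsed point enters `(0, b')`. Then a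
  little mass may be added beyond `b'` as well, and the step succeeds. If all steps succeed, the
  densities converge in every `C^k` norm to a density whose only zero in `[0,1]` is `0`, and
  `(1/8, 3/8)` still wanders (`final_of_steps`).
* Otherwise, by the intermediate value theorem, the orbit of the collapsed point never crosses `0`
  during the perturbation. This forces `(0, b)` to wander under a map for which its image has
  positive length, whereas `b` is a flat point from the right. The map may be rewritten on the
  wandering interval `(0, b)` without affecting its wandering; moving `b` to the origin and making
  the map a diffeomorphism on that interval, smooth up to its endpoints, again gives `Final`
  (`final_of_wand`).

The map constructed is not conjugate to a rotation since rotations preserve Lebesgue measure, so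
that Poincaré recurrence excludes wandering open sets (`not_conj`).
-/

open Filter

/-- A non-empty open interval (arc) of the circle. -/
def IsOpenArc (I : Set (AddCircle (1 : ℝ))) : Prop :=
  ∃ a b : ℝ, a < b ∧ b - a < 1 ∧
    I = (fun x : ℝ => (x : AddCircle (1 : ℝ))) '' Set.Ioo a b

/-- A wandering interval for `f`. -/
def IsWanderingInterval (f : AddCircle (1 : ℝ) → AddCircle (1 : ℝ))
    (I : Set (AddCircle (1 : ℝ))) : Prop :=
  IsOpenArc I ∧ ∀ n m : ℕ, n ≠ m → f^[n] '' I ∩ f^[m] '' I = ∅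

namespace FlatDenjoy

open Set Topology

/-! ### Densities, normalised primitives and translation numbers -/

/-- A continuous density `w ≥ 0` on the line with positive mass on `[0,1]`. Only its restriction to
the fundamental domain `[0,1]` matters for the circle map it defines. -/
structure Dens where
  w : ℝ → ℝ
  cont : Continuous w
  nonneg : ∀ x, 0 ≤ w x
  pos : 0 < ∫ x in (0 : ℝ)..1, w x

/-- The primitive of `w` vanishing at `0`. -/
noncomputable def prim (w : ℝ → ℝ) (x : ℝ) : ℝ := ∫ y in (0 : ℝ)..x, w y

/-- The degree one map of the line which on `[0,1]` is the primitive of `w`, normalised to map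
`0` to `0` and `1` to `1`. -/
noncomputable def phi (w : ℝ → ℝ) (x : ℝ) : ℝ :=
  ⌊x⌋ + prim w (Int.fract x) / prim w 1

lemma prim_zero (w : ℝ → ℝ) : prim w 0 = 0 := by simp [prim]

lemma hasDerivAt_prim {w : ℝ → ℝ} (hw : Continuous w) (x : ℝ) : HasDerivAt (prim w) (w x) x :=
  intervalIntegral.integral_hasDerivAt_right (hw.intervalIntegrable _ _)
    (hw.stronglyMeasurableAtFilter _ _) hw.continuousAt

lemma continuous_prim {w : ℝ → ℝ} (hw : Continuous w) : Continuous (prim w) :=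
  continuous_iff_continuousAt.2 fun x => (hasDerivAt_prim hw x).continuousAt

lemma prim_sub {w : ℝ → ℝ} (hw : Continuous w) (x y : ℝ) :
    prim w y - prim w x = ∫ z in x..y, w z :=
  intervalIntegral.integral_interval_sub_left (hw.intervalIntegrable _ _)
    (hw.intervalIntegrable _ _)

lemma contDiff_prim {w : ℝ → ℝ} (hw : ContDiff ℝ (⊤ : ℕ∞) w) : ContDiff ℝ (⊤ : ℕ∞) (prim w) := by
  have h : deriv (prim w) = w := funext fun x => (hasDerivAt_prim hw.continuous x).deriv
  refine contDiff_infty_iff_deriv.2 ⟨fun x => (hasDerivAt_prim hw.continuous x).differentiableAt, ?_⟩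
  rw [h]; exact hw

lemma Dens.monotone_prim (d : Dens) : Monotone (prim d.w) := by
  refine monotone_of_deriv_nonneg
    (fun x => (hasDerivAt_prim d.cont x).differentiableAt) fun x => ?_
  rw [(hasDerivAt_prim d.cont x).deriv]; exact d.nonneg x

lemma Dens.prim_one_pos (d : Dens) : 0 < prim d.w 1 := d.pos

lemma Dens.ratio_mem (d : Dens) {x : ℝ} (hx : x ∈ Icc (0 : ℝ) 1) :
    prim d.w x / prim d.w 1 ∈ Icc (0 : ℝ) 1 := by
  have h0 := d.monotone_prim hx.1
  have h1 := d.monotone_prim hx.2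
  rw [prim_zero] at h0
  exact ⟨div_nonneg h0 d.prim_one_pos.le, (div_le_one d.prim_one_pos).2 h1⟩

lemma fract_mem (x : ℝ) : Int.fract x ∈ Icc (0 : ℝ) 1 :=
  ⟨Int.fract_nonneg x, (Int.fract_lt_one x).le⟩

lemma phi_add_int (w : ℝ → ℝ) (x : ℝ) (n : ℤ) : phi w (x + n) = phi w x + n := by
  simp [phi]; ring

lemma phi_add_one (w : ℝ → ℝ) (x : ℝ) : phi w (x + 1) = phi w x + 1 := by
  simpa using phi_add_int w x 1

lemma Dens.phi_eq (d : Dens) {x : ℝ} (hx : x ∈ Icc (0 : ℝ) 1) :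
    phi d.w x = prim d.w x / prim d.w 1 := by
  rcases hx.2.lt_or_eq with h | rfl
  · have hf : ⌊x⌋ = 0 := Int.floor_eq_zero_iff.2 ⟨hx.1, h⟩
    rw [phi, Int.fract, hf]; simp
  · simp [phi, prim_zero, div_self d.prim_one_pos.ne']

lemma Dens.monotone_phi (d : Dens) : Monotone (phi d.w) := by
  intro x y hxy
  rcases (Int.floor_mono hxy).lt_or_eq with h | h
  · have h' : (⌊x⌋ : ℝ) + 1 ≤ ⌊y⌋ := by exact_mod_cast h
    have h1 := (d.ratio_mem (fract_mem x)).2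
    have h2 := (d.ratio_mem (fract_mem y)).1
    simp only [phi]; linarith
  · have : Int.fract x ≤ Int.fract y := by simp only [Int.fract, h]; linarith
    have := d.monotone_prim this
    simp only [phi, h]
    have := div_le_div_of_nonneg_right this d.prim_one_pos.le
    linarith

lemma Dens.continuous_phi (d : Dens) : Continuous (phi d.w) := by
  have h : phi d.w = fun x => x + ((fun y => prim d.w y / prim d.w 1 - y) ∘ Int.fract) x := by
    funext x; simp only [phi, Function.comp]
    have := Int.floor_add_fract x
    linarith
  rw [h]
  refine continuous_id.add (ContinuousOn.comp_fract'' ?_ ?_)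
  · exact (((continuous_prim d.cont).div_const _).sub continuous_id).continuousOn
  · simp [prim_zero, div_self d.prim_one_pos.ne']

lemma Dens.phi_le (d : Dens) (x : ℝ) : phi d.w x ≤ x + 1 := by
  have := (d.ratio_mem (fract_mem x)).2
  have := Int.floor_le x
  simp only [phi]; linarith

lemma Dens.le_phi (d : Dens) (x : ℝ) : x - 1 ≤ phi d.w x := by
  have := (d.ratio_mem (fract_mem x)).1
  have := (Int.lt_floor_add_one x).le
  simp only [phi]; linarith

/-- The map `t + phi w` as an element of Mathlib's monoid of monotone degree one maps. -/
noncomputable def Dens.lift (d : Dens) (t : ℝ) : CircleDeg1Lift :=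
  ⟨⟨fun x => t + phi d.w x, fun _ _ h => add_le_add_right (d.monotone_phi h) t⟩,
    fun x => by simp [phi_add_one, add_assoc]⟩

lemma Dens.lift_apply (d : Dens) (t x : ℝ) : d.lift t x = t + phi d.w x := rfl

lemma Dens.continuous_transl (d : Dens) : Continuous fun t => (d.lift t).translationNumber := by
  -- the averages `(f_t ^ m) 0 / m` converge to the translation number uniformly in `t`
  have hit : ∀ m : ℕ, Continuous fun t => (d.lift t)^[m] 0 := by
    intro m
    induction m with
    | zero => simpa using continuous_const
    | succ m ih =>
      simp only [Function.iterate_succ_apply', d.lift_apply]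
      exact continuous_id.add (d.continuous_phi.comp ih)
  have hu : TendstoUniformly (fun (m : ℕ) t => (d.lift t)^[m] 0 / (m : ℝ))
      (fun t => (d.lift t).translationNumber) atTop := by
    rw [Metric.tendstoUniformly_iff]
    intro ε hε
    obtain ⟨N, hN⟩ := exists_nat_gt (1 / ε)
    filter_upwards [eventually_ge_atTop N, eventually_gt_atTop 0] with m hm hm0 t
    have h1 := (d.lift t).dist_pow_map_zero_mul_translationNumber_le m
    have hm0' : (0 : ℝ) < m := by exact_mod_cast hm0
    have hm' : (N : ℝ) ≤ m := by exact_mod_cast hm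
    rw [CircleDeg1Lift.coe_pow, Real.dist_eq] at h1
    rw [Real.dist_eq, abs_sub_comm]
    have h2 : (d.lift t)^[m] 0 / (m : ℝ) - (d.lift t).translationNumber
        = ((d.lift t)^[m] 0 - m * (d.lift t).translationNumber) / m := by
      field_simp
    rw [h2, abs_div, abs_of_pos hm0', div_lt_iff₀ hm0']
    have : 1 < ε * m := by
      rw [div_lt_iff₀ hε] at hN; nlinarith
    linarith
  exact hu.continuous (Frequently.of_forall fun m => (hit m).div_const _)

/-- The parameters for which the translation number is at least `ρ`. -/
def Dens.params (ρ : ℝ) (d : Dens) : Set ℝ := {t | ρ ≤ (d.lift t).translationNumber}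

/-- The smallest `t` for which `t + phi w` has translation number `ρ`. -/
noncomputable def Dens.tt (ρ : ℝ) (d : Dens) : ℝ := sInf (d.params ρ)

lemma Dens.bddBelow_params (ρ : ℝ) (d : Dens) : BddBelow (d.params ρ) := by
  refine ⟨ρ - 1, fun t ht => ?_⟩
  have : (d.lift t).translationNumber ≤ t + 1 := by
    refine CircleDeg1Lift.translationNumber_le_of_le_add _ fun x => ?_
    rw [d.lift_apply]; linarith [d.phi_le x]
  have h : ρ ≤ _ := ht
  linarith

lemma Dens.params_nonempty (ρ : ℝ) (d : Dens) : (d.params ρ).Nonempty := by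
  refine ⟨ρ + 1, ?_⟩
  refine CircleDeg1Lift.le_translationNumber_of_add_le _ fun x => ?_
  rw [d.lift_apply]; linarith [d.le_phi x]

lemma Dens.tt_mem (ρ : ℝ) (d : Dens) : d.tt ρ ∈ d.params ρ :=
  IsClosed.csInf_mem (isClosed_le continuous_const d.continuous_transl)
    (d.params_nonempty ρ) (d.bddBelow_params ρ)

/-- The lift attached to `w`, translated so that its translation number is `ρ`. -/
noncomputable def Dens.F (ρ : ℝ) (d : Dens) : CircleDeg1Lift := d.lift (d.tt ρ)

lemma Dens.F_apply (ρ : ℝ) (d : Dens) (x : ℝ) : d.F ρ x = d.tt ρ + phi d.w x := rfl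

lemma Dens.transl_F (ρ : ℝ) (d : Dens) : (d.F ρ).translationNumber = ρ := by
  refine le_antisymm ?_ (d.tt_mem ρ)
  have h : ∀ t < d.tt ρ, (d.lift t).translationNumber ≤ ρ := by
    intro t ht
    by_contra! hc
    exact absurd (csInf_le (d.bddBelow_params ρ) hc.le) (not_le.2 ht)
  have hc : Tendsto (fun t => (d.lift t).translationNumber) (𝓝[<] (d.tt ρ))
      (𝓝 (d.F ρ).translationNumber) :=
    (d.continuous_transl.tendsto _).mono_left nhdsWithin_le_nhds
  exact le_of_tendsto hc (eventually_nhdsWithin_of_forall h)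

lemma Dens.continuous_F (ρ : ℝ) (d : Dens) : Continuous (d.F ρ) :=
  continuous_const.add d.continuous_phi

lemma Dens.continuous_F_iter (ρ : ℝ) (d : Dens) (m : ℕ) : Continuous (d.F ρ)^[m] :=
  (d.continuous_F ρ).iterate m

/-- If `φ_d` exceeds `φ_e` by at most `δ`, then the translation normalising `e` exceeds the one
normalising `d` by at most `δ`. -/
lemma Dens.tt_le (ρ : ℝ) {d e : Dens} {δ : ℝ} (h : ∀ x, phi d.w x ≤ phi e.w x + δ) :
    e.tt ρ ≤ d.tt ρ + δ := by
  refine csInf_le (e.bddBelow_params ρ) ?_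
  refine le_trans (d.tt_mem ρ) (CircleDeg1Lift.translationNumber_mono fun x => ?_)
  rw [d.lift_apply, e.lift_apply]; linarith [h x]

lemma Dens.F_dist (ρ : ℝ) {d e : Dens} {δ : ℝ} (h : ∀ x, |phi d.w x - phi e.w x| ≤ δ) (x : ℝ) :
    |d.F ρ x - e.F ρ x| ≤ 2 * δ := by
  have h1 := Dens.tt_le ρ (d := d) (e := e) (δ := δ) fun x => by linarith [abs_le.1 (h x)]
  have h2 := Dens.tt_le ρ (d := e) (e := d) (δ := δ) fun x => by linarith [abs_le.1 (h x)]
  have h3 := abs_le.1 (h x)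
  rw [d.F_apply, e.F_apply, abs_le]
  constructor <;> linarith

lemma Dens.prim_dist {d e : Dens} {δ : ℝ} (h : ∀ x ∈ Icc (0 : ℝ) 1, |e.w x - d.w x| ≤ δ)
    {x : ℝ} (hx : x ∈ Icc (0 : ℝ) 1) : |prim e.w x - prim d.w x| ≤ δ := by
  have hδ : 0 ≤ δ := (abs_nonneg _).trans (h x hx)
  have h1 : prim e.w x - prim d.w x = ∫ y in (0 : ℝ)..x, (e.w y - d.w y) :=
    (intervalIntegral.integral_sub (e.cont.intervalIntegrable _ _)
      (d.cont.intervalIntegrable _ _)).symm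
  rw [h1]
  have h2 := intervalIntegral.norm_integral_le_of_norm_le_const (a := (0 : ℝ)) (b := x) (C := δ)
    (f := fun y => e.w y - d.w y) (fun y hy => by
      rw [uIoc_of_le hx.1] at hy
      exact h y ⟨hy.1.le, hy.2.trans hx.2⟩)
  rw [Real.norm_eq_abs] at h2
  rw [sub_zero, abs_of_nonneg hx.1] at h2
  nlinarith [hx.2]

lemma Dens.phi_dist {d e : Dens} {δ : ℝ} (h : ∀ x ∈ Icc (0 : ℝ) 1, |e.w x - d.w x| ≤ δ) (x : ℝ) :
    |phi e.w x - phi d.w x| ≤ 2 * δ / prim d.w 1 := by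
  have hx := fract_mem x
  set y := Int.fract x
  have h1 := Dens.prim_dist h hx
  have h2 := Dens.prim_dist h (right_mem_Icc.2 zero_le_one)
  have hC := d.prim_one_pos
  have hC' := e.prim_one_pos
  have hr := e.ratio_mem hx
  have e1 : phi e.w x - phi d.w x = ((prim e.w y - prim d.w y)
      - (prim e.w y / prim e.w 1) * (prim e.w 1 - prim d.w 1)) / prim d.w 1 := by
    simp only [phi]
    change _ + prim e.w y / _ - (_ + prim d.w y / _) = _
    field_simp
    ring
  rw [e1, abs_div, abs_of_pos hC]
  refine div_le_div_of_nonneg_right ?_ hC.le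
  have h3 : |(prim e.w y / prim e.w 1) * (prim e.w 1 - prim d.w 1)| ≤ δ := by
    rw [abs_mul, abs_of_nonneg hr.1]
    nlinarith [hr.2, abs_nonneg (prim e.w 1 - prim d.w 1)]
  have h4 := abs_sub (prim e.w y - prim d.w y)
    ((prim e.w y / prim e.w 1) * (prim e.w 1 - prim d.w 1))
  linarith

/-- Uniform convergence of the densities on `[0,1]` gives convergence of every orbit of the
normalised lifts. -/
lemma Dens.tendsto_iter (ρ : ℝ) {ι : Type*} {l : Filter ι} {e : ι → Dens} {d : Dens}
    (h : TendstoUniformlyOn (fun i => (e i).w) d.w l (Icc 0 1)) (m : ℕ) (x : ℝ) :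
    Tendsto (fun i => ((e i).F ρ)^[m] x) l (𝓝 ((d.F ρ)^[m] x)) := by
  have hF : TendstoUniformly (fun i => ⇑((e i).F ρ)) (d.F ρ) l := by
    rw [Metric.tendstoUniformly_iff]
    intro ε hε
    rw [Metric.tendstoUniformlyOn_iff] at h
    have hC := d.prim_one_pos
    filter_upwards [h (ε * prim d.w 1 / 8) (by positivity)] with i hi y
    have h1 := Dens.phi_dist (d := d) (e := e i) (δ := ε * prim d.w 1 / 8) fun z hz => by
      have := (hi z hz).le
      rwa [dist_comm, Real.dist_eq] at this
    have h2 := Dens.F_dist ρ h1 y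
    rw [dist_comm, Real.dist_eq]
    refine h2.trans_lt ?_
    have : 2 * (2 * (ε * prim d.w 1 / 8) / prim d.w 1) = ε / 2 := by field_simp; ring
    rw [this]; linarith
  induction m with
  | zero => simpa using tendsto_const_nhds
  | succ m ih =>
    simp only [Function.iterate_succ_apply']
    exact hF.tendsto_comp (d.continuous_F ρ).continuousAt ih

/-! ### Wandering intervals and bump functions -/

/-- `(u, v)` wanders for a lift `f` of rotation number `ρ`: the iterates `f^m (u, v)` and the integer
translates `(u, v) + r` are disjoint and ordered as the corresponding numbers `mρ` and `r`. The
condition consists of non-strict inequalities, so it passes to limits of `f`. -/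
def Wand (ρ : ℝ) (f : ℝ → ℝ) (u v : ℝ) : Prop :=
  ∀ (m : ℕ) (r : ℤ), (m * ρ < r → f^[m] v ≤ u + r) ∧ (r < m * ρ → v + r ≤ f^[m] u)

lemma iter_add_int (f : CircleDeg1Lift) (m : ℕ) (x : ℝ) (r : ℤ) : f^[m] (x + r) = f^[m] x + r := by
  rw [← CircleDeg1Lift.coe_pow]; exact (f ^ m).map_add_int x r

lemma Dens.iter_lt (ρ : ℝ) (d : Dens) {m : ℕ} {r : ℤ} (h : m * ρ < r) (x : ℝ) :
    (d.F ρ)^[m] x < x + r := by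
  rw [← CircleDeg1Lift.coe_pow]
  refine CircleDeg1Lift.map_lt_of_translationNumber_lt_int _ ?_ x
  rwa [CircleDeg1Lift.translationNumber_pow, d.transl_F]

lemma Dens.lt_iter (ρ : ℝ) (d : Dens) {m : ℕ} {r : ℤ} (h : r < m * ρ) (x : ℝ) :
    x + r < (d.F ρ)^[m] x := by
  rw [← CircleDeg1Lift.coe_pow]
  refine CircleDeg1Lift.lt_map_of_int_lt_translationNumber _ ?_ x
  rwa [CircleDeg1Lift.translationNumber_pow, d.transl_F]

/-- An interval collapsed to a point by some iterate wanders: otherwise that point would return to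
itself on the wrong side. -/
lemma Dens.wand_of_collapse (ρ : ℝ) (d : Dens) {u v : ℝ} {k : ℕ}
    (h : (d.F ρ)^[k] u = (d.F ρ)^[k] v) : Wand ρ (d.F ρ) u v := by
  have hmono := (d.F ρ).monotone.iterate k
  intro m r
  constructor
  · intro hm
    by_contra! hc
    have h1 := hmono hc.le
    rw [iter_add_int, ← Function.iterate_add_apply, add_comm k m, Function.iterate_add_apply, h] at h1
    exact absurd (d.iter_lt ρ hm ((d.F ρ)^[k] v)) (not_lt.2 h1)
  · intro hm
    by_contra! hc
    have h1 := hmono hc.le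
    rw [iter_add_int, ← Function.iterate_add_apply, add_comm k m, Function.iterate_add_apply, h] at h1
    exact absurd (d.lt_iter ρ hm ((d.F ρ)^[k] v)) (not_lt.2 h1)

/-- A smooth function which is positive on `(a, c)` and zero elsewhere. -/
noncomputable def bmp (a c x : ℝ) : ℝ := expNegInvGlue (x - a) * expNegInvGlue (c - x)

lemma bmp_nonneg (a c x : ℝ) : 0 ≤ bmp a c x :=
  mul_nonneg (expNegInvGlue.nonneg _) (expNegInvGlue.nonneg _)

lemma bmp_pos {a c x : ℝ} (h1 : a < x) (h2 : x < c) : 0 < bmp a c x :=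
  mul_pos (expNegInvGlue.pos_of_pos (by linarith)) (expNegInvGlue.pos_of_pos (by linarith))

lemma bmp_left {a x : ℝ} (c : ℝ) (h : x ≤ a) : bmp a c x = 0 := by
  rw [bmp, expNegInvGlue.zero_of_nonpos (by linarith), zero_mul]

lemma bmp_right {c x : ℝ} (a : ℝ) (h : c ≤ x) : bmp a c x = 0 := by
  rw [bmp, expNegInvGlue.zero_of_nonpos (x := c - x) (by linarith), mul_zero]

lemma contDiff_bmp (a c : ℝ) : ContDiff ℝ (⊤ : ℕ∞) (bmp a c) :=
  (expNegInvGlue.contDiff.comp (contDiff_id.sub contDiff_const)).mul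
    (expNegInvGlue.contDiff.comp (contDiff_const.sub contDiff_id))

lemma hasCompactSupport_bmp (a c : ℝ) : HasCompactSupport (bmp a c) := by
  refine HasCompactSupport.intro (isCompact_Icc (a := a) (b := c)) fun x hx => ?_
  rw [mem_Icc, not_and_or, not_le, not_le] at hx
  exact hx.elim (fun h => bmp_left c h.le) (fun h => bmp_right a h.le)

lemma bmp_bound (a c : ℝ) (N : ℕ) :
    ∃ M, ∀ i ≤ N, ∀ x, ‖iteratedFDeriv ℝ i (bmp a c) x‖ ≤ M := by
  have h : ∀ i : ℕ, ∃ M, ∀ x, ‖iteratedFDeriv ℝ i (bmp a c) x‖ ≤ M := fun i =>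
    ((contDiff_bmp a c).continuous_iteratedFDeriv (by exact_mod_cast le_top)).bounded_above_of_compact_support
      ((hasCompactSupport_bmp a c).iteratedFDeriv i)
  choose M hM using h
  refine ⟨∑ i ∈ Finset.range (N + 1), |M i|, fun i hi x => ((hM i x).trans (le_abs_self _)).trans ?_⟩
  exact Finset.single_le_sum (f := fun i => |M i|) (fun i _ => abs_nonneg _)
    (Finset.mem_range.2 (by omega))

/-- The perturbation of `d` by nonnegative multiples of two bumps; squares keep the parameters
unconstrained. -/
noncomputable def Dens.pert (d : Dens) (b a s u : ℝ) : Dens where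
  w x := d.w x + s ^ 2 * bmp b a x + u ^ 2 * bmp b 2 x
  cont := by
    have h1 := (contDiff_bmp b a).continuous
    have h2 := (contDiff_bmp b 2).continuous
    have h3 := d.cont
    fun_prop
  nonneg x := by
    have := d.nonneg x
    have := bmp_nonneg b a x
    have := bmp_nonneg b 2 x
    positivity
  pos := by
    have h1 := (contDiff_bmp b a).continuous
    have h2 := (contDiff_bmp b 2).continuous
    have h3 := d.cont
    refine d.pos.trans_le (intervalIntegral.integral_mono_on zero_le_one
      (d.cont.intervalIntegrable _ _) (Continuous.intervalIntegrable (by fun_prop) _ _) ?_)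
    intro x _
    have := bmp_nonneg b a x
    have := bmp_nonneg b 2 x
    have : 0 ≤ s ^ 2 * bmp b a x + u ^ 2 * bmp b 2 x := by positivity
    linarith

lemma Dens.pert_apply (d : Dens) (b a s u x : ℝ) :
    (d.pert b a s u).w x = d.w x + s ^ 2 * bmp b a x + u ^ 2 * bmp b 2 x := rfl

lemma Dens.F_pert_zero (ρ : ℝ) (d : Dens) (b a : ℝ) : (d.pert b a 0 0).F ρ = d.F ρ := by
  have : d.pert b a 0 0 = d := by
    cases d; simp [Dens.pert]
  rw [this]

lemma Dens.continuous_pert (ρ : ℝ) (d : Dens) (b a : ℝ) (m : ℕ) (x : ℝ) :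
    Continuous fun p : ℝ × ℝ => ((d.pert b a p.1 p.2).F ρ)^[m] x := by
  obtain ⟨M1, hM1⟩ := bmp_bound b a 0
  obtain ⟨M2, hM2⟩ := bmp_bound b 2 0
  have hM1' : ∀ x, bmp b a x ≤ M1 := fun x => by
    have := hM1 0 le_rfl x
    rw [norm_iteratedFDeriv_zero] at this
    exact (le_abs_self _).trans this
  have hM2' : ∀ x, bmp b 2 x ≤ M2 := fun x => by
    have := hM2 0 le_rfl x
    rw [norm_iteratedFDeriv_zero] at this
    exact (le_abs_self _).trans this
  refine continuous_iff_continuousAt.2 fun q => Dens.tendsto_iter ρ ?_ m x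
  rw [Metric.tendstoUniformlyOn_iff]
  intro ε hε
  have hc : Continuous fun p : ℝ × ℝ => |q.1 ^ 2 - p.1 ^ 2| * M1 + |q.2 ^ 2 - p.2 ^ 2| * M2 := by
    fun_prop
  have h0 := hc.tendsto q
  simp only [sub_self, abs_zero, zero_mul, add_zero] at h0
  filter_upwards [h0.eventually (gt_mem_nhds hε)] with p hp y _
  rw [Real.dist_eq, d.pert_apply, d.pert_apply]
  refine lt_of_le_of_lt ?_ hp
  have e : d.w y + q.1 ^ 2 * bmp b a y + q.2 ^ 2 * bmp b 2 y
      - (d.w y + p.1 ^ 2 * bmp b a y + p.2 ^ 2 * bmp b 2 y)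
      = (q.1 ^ 2 - p.1 ^ 2) * bmp b a y + (q.2 ^ 2 - p.2 ^ 2) * bmp b 2 y := by ring
  rw [e]
  refine (abs_add_le _ _).trans ?_
  rw [abs_mul, abs_mul, abs_of_nonneg (bmp_nonneg b a y), abs_of_nonneg (bmp_nonneg b 2 y)]
  have := mul_le_mul_of_nonneg_left (hM1' y) (abs_nonneg (q.1 ^ 2 - p.1 ^ 2))
  have := mul_le_mul_of_nonneg_left (hM2' y) (abs_nonneg (q.2 ^ 2 - p.2 ^ 2))
  linarith

/-- If `w` vanishes on `[a, b] ⊆ [0,1]`, the map is constant there. -/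
lemma Dens.F_flat (ρ : ℝ) (d : Dens) {a b x y : ℝ} (ha : 0 ≤ a) (hb : b ≤ 1)
    (h : ∀ z ∈ Icc a b, d.w z = 0) (hx : x ∈ Icc a b) (hy : y ∈ Icc a b) :
    d.F ρ x = d.F ρ y := by
  have hp : prim d.w x = prim d.w y := by
    rw [← sub_eq_zero, prim_sub d.cont]
    refine (intervalIntegral.integral_congr (g := fun _ => 0) fun z hz => ?_).trans (by simp)
    exact h z ((uIcc_subset_Icc hy hx) hz)
  rw [d.F_apply, d.F_apply, d.phi_eq ⟨ha.trans hx.1, hx.2.trans hb⟩,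
    d.phi_eq ⟨ha.trans hy.1, hy.2.trans hb⟩, hp]

/-- What has to be built: a smooth density, flat at `0` and positive on `(0,1]`, together with a
translation `t` such that `t + phi w` has a wandering interval. -/
def Final (ρ : ℝ) : Prop :=
  ∃ d : Dens, ContDiff ℝ (⊤ : ℕ∞) d.w ∧ (∀ x ≤ 0, d.w x = 0) ∧ (∀ x ∈ Ioc (0 : ℝ) 1, 0 < d.w x) ∧
    ∃ t u v, u < v ∧ v - u < 1 ∧ Wand ρ (fun x => t + phi d.w x) u v

/-- A stage of the construction: the density is smooth, vanishes exactly on `[0, b]` within `[0,1]`,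
and some iterate sends `[1/8, 3/8]` into the interior of the flat interval `[0, b]`, modulo an
integer translation. -/
structure Stage (ρ : ℝ) (d : Dens) (b : ℝ) : Prop where
  pos : 0 < b
  le : b ≤ 1 / 2
  smooth : ContDiff ℝ (⊤ : ℕ∞) d.w
  flat : ∀ x ≤ b, d.w x = 0
  wpos : ∀ x ∈ Ioc b 1, 0 < d.w x
  land : ∃ (k : ℕ) (r : ℤ), (d.F ρ)^[k] (1 / 8) ∈ Ioo (r : ℝ) (r + b) ∧
    (d.F ρ)^[k] (3 / 8) ∈ Ioo (r : ℝ) (r + b)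

lemma Stage.wand {ρ : ℝ} {d : Dens} {b : ℝ} (h : Stage ρ d b) :
    Wand ρ (d.F ρ) (1 / 8) (3 / 8) := by
  obtain ⟨k, r, h1, h2⟩ := h.land
  refine d.wand_of_collapse ρ (k := k + 1) ?_
  have key := d.F_flat ρ (a := 0) (b := b) le_rfl (by linarith [h.le]) (fun z hz => h.flat z hz.2)
    (x := (d.F ρ)^[k] (1 / 8) - r) (y := (d.F ρ)^[k] (3 / 8) - r)
    ⟨by linarith [h1.1], by linarith [h1.2]⟩ ⟨by linarith [h2.1], by linarith [h2.2]⟩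
  rw [CircleDeg1Lift.map_sub_int, CircleDeg1Lift.map_sub_int] at key
  rw [Function.iterate_succ_apply', Function.iterate_succ_apply']
  linarith

/-- Multiples of an irrational number approach integers from below. -/
lemma exists_nat_mul_near {ρ : ℝ} (hirr : Irrational ρ) {ε : ℝ} (hε : 0 < ε) :
    ∃ (i : ℕ) (j : ℤ), (i : ℝ) * ρ < j ∧ (j : ℝ) < i * ρ + ε := by
  obtain ⟨n, hn⟩ := exists_nat_gt (1 / ε)
  have hn0 : (0 : ℝ) < n := (by positivity : (0 : ℝ) < 1 / ε).trans hn
  have hn0' : 0 < n := by exact_mod_cast hn0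
  obtain ⟨j, k, hk0, -, hjk⟩ := Real.exists_int_int_abs_mul_sub_le ρ hn0'
  obtain ⟨q, rfl⟩ := Int.eq_ofNat_of_zero_le hk0.le
  simp only [Int.cast_natCast] at hjk hk0
  have hsmall : (1 : ℝ) / (n + 1) < ε := by
    rw [div_lt_iff₀ hε] at hn
    rw [div_lt_iff₀ (by positivity)]; nlinarith
  have hq : q ≠ 0 := by rintro rfl; simp at hk0
  have hne : (q : ℝ) * ρ - j ≠ 0 := fun h =>
    (hirr.natCast_mul hq).ne_int j (by linarith)
  have hab := abs_le.1 hjk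
  rcases lt_or_gt_of_ne hne with h | h
  · exact ⟨q, j, by linarith, by linarith⟩
  · -- `qρ` lies slightly above `j`: take the largest multiple of the excess that stays below `1`
    set δ := (q : ℝ) * ρ - j with hδ
    obtain ⟨N, hN1, hN2⟩ : ∃ N : ℕ, (N : ℝ) * δ ≤ 1 ∧ 1 < (N + 1) * δ := by
      refine ⟨⌊1 / δ⌋₊, ?_, ?_⟩
      · have := Nat.floor_le (a := 1 / δ) (by positivity)
        rwa [le_div_iff₀ h] at this
      · have := Nat.lt_floor_add_one (1 / δ)
        rwa [div_lt_iff₀ h] at this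
    have hδ1 : δ ≤ 1 := by
      refine hab.2.trans ?_
      rw [div_le_one (by positivity)]; linarith
    have hN0 : N ≠ 0 := by
      rintro rfl
      norm_num at hN2; linarith
    have hne1 : (N : ℝ) * δ ≠ 1 := by
      intro h1
      refine (hirr.natCast_mul (mul_ne_zero hN0 hq)).ne_int (N * j + 1) ?_
      push_cast
      rw [hδ] at h1; linarith
    have hlt := lt_of_le_of_ne hN1 hne1
    refine ⟨N * q, N * j + 1, ?_, ?_⟩
    · push_cast; rw [hδ] at hlt; linarith
    · push_cast
      have : (N : ℝ) * δ = N * (q * ρ) - N * j := by rw [hδ]; ring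
      nlinarith

/-! ### One step of the construction -/

lemma pert_iteratedFDeriv_le {b a M η s u : ℝ} {i : ℕ} {x : ℝ}
    (h1 : ‖iteratedFDeriv ℝ i (bmp b a) x‖ ≤ M) (h2 : ‖iteratedFDeriv ℝ i (bmp b 2) x‖ ≤ M)
    (hs : s ^ 2 * M ≤ η / 2) (hu : u ^ 2 * M ≤ η / 2) (d : Dens) :
    ‖iteratedFDeriv ℝ i (fun y => (d.pert b a s u).w y - d.w y) x‖ ≤ η := by
  have e : (fun y => (d.pert b a s u).w y - d.w y) = s ^ 2 • bmp b a + u ^ 2 • bmp b 2 := by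
    funext y
    simp only [d.pert_apply, Pi.add_apply, Pi.smul_apply, smul_eq_mul]; ring
  have c1 : ContDiffAt ℝ i (bmp b a) x :=
    ((contDiff_bmp b a).of_le (by exact_mod_cast le_top)).contDiffAt
  have c2 : ContDiffAt ℝ i (bmp b 2) x :=
    ((contDiff_bmp b 2).of_le (by exact_mod_cast le_top)).contDiffAt
  have c1' : ContDiffAt ℝ i (s ^ 2 • bmp b a) x := contDiffAt_const.smul c1
  have c2' : ContDiffAt ℝ i (u ^ 2 • bmp b 2) x := contDiffAt_const.smul c2
  rw [e, iteratedFDeriv_add_apply c1' c2',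
    iteratedFDeriv_const_smul_apply c1, iteratedFDeriv_const_smul_apply c2]
  refine (norm_add_le _ _).trans ?_
  rw [norm_smul, norm_smul, Real.norm_of_nonneg (sq_nonneg s), Real.norm_of_nonneg (sq_nonneg u)]
  have := mul_le_mul_of_nonneg_left h1 (sq_nonneg s)
  have := mul_le_mul_of_nonneg_left h2 (sq_nonneg u)
  linarith

lemma Dens.continuous_pert_comp (ρ : ℝ) (d : Dens) (b a : ℝ) (m : ℕ) (x : ℝ) {g : ℝ → ℝ × ℝ}
    (hg : Continuous g) : Continuous fun s => ((d.pert b a (g s).1 (g s).2).F ρ)^[m] x := by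
  have h := (d.continuous_pert ρ b a m x).comp hg
  simp only [Function.comp_def] at h
  exact h

/-- The inductive step. The family `d.pert b' a s 0` raises the map on `(b', a)` and stays constant on
`[a, b]`, where `[1/8, 3/8]` lands. Either for some small `s` the orbit of `[a, b]` reaches the shorter
flat interval `[0, b']`, and a little slope can then be added without spoiling this; or, by the
intermediate value theorem in `s`, that orbit never crosses `0`, so that `(0, b)` wanders although
its image under the map has positive length. -/
theorem step {ρ : ℝ} (hirr : Irrational ρ) {d : Dens} {b : ℝ} (hS : Stage ρ d b) {η : ℝ}
    (hη : 0 < η) (N : ℕ) :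
    (∃ (d' : Dens) (b' : ℝ), Stage ρ d' b' ∧ b' ≤ η ∧ (∀ x, d.w x ≤ d'.w x) ∧
      ∀ i ≤ N, ∀ x, ‖iteratedFDeriv ℝ i (fun y => d'.w y - d.w y) x‖ ≤ η) ∨
    ∃ e : Dens, (∀ x, b ≤ x → e.w x = d.w x) ∧ 0 < prim e.w b ∧ Wand ρ (e.F ρ) 0 b := by
  obtain ⟨k, r₀, hu₀, hv₀⟩ := hS.land
  have hb := hS.pos
  have hb1 := hS.le
  obtain ⟨a, ha0, hau, hav⟩ : ∃ a, 0 < a ∧ r₀ + a < (d.F ρ)^[k] (1 / 8) ∧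
      r₀ + a < (d.F ρ)^[k] (3 / 8) := by
    have h1 := hu₀.1
    have h2 := hv₀.1
    refine ⟨min ((d.F ρ)^[k] (1 / 8) - r₀) ((d.F ρ)^[k] (3 / 8) - r₀) / 2, ?_, ?_, ?_⟩
    · exact half_pos (lt_min (by linarith) (by linarith))
    · have := min_le_left ((d.F ρ)^[k] (1 / 8) - r₀) ((d.F ρ)^[k] (3 / 8) - r₀)
      linarith
    · have := min_le_right ((d.F ρ)^[k] (1 / 8) - r₀) ((d.F ρ)^[k] (3 / 8) - r₀)
      linarith
  have hab : a < b := by linarith [hu₀.2]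
  set b' := min (a / 2) η with hb'
  have hb'0 : 0 < b' := lt_min (by linarith) hη
  have hb'a : b' < a := (min_le_left _ _).trans_lt (by linarith)
  obtain ⟨M1, hM1⟩ := bmp_bound b' a N
  obtain ⟨M2, hM2⟩ := bmp_bound b' 2 N
  set M := max M1 M2 with hM
  have hM1' : ∀ i ≤ N, ∀ x, ‖iteratedFDeriv ℝ i (bmp b' a) x‖ ≤ M :=
    fun i hi x => (hM1 i hi x).trans (le_max_left _ _)
  have hM2' : ∀ i ≤ N, ∀ x, ‖iteratedFDeriv ℝ i (bmp b' 2) x‖ ≤ M :=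
    fun i hi x => (hM2 i hi x).trans (le_max_right _ _)
  have hsq : ∀ᶠ s in 𝓝 (0 : ℝ), s ^ 2 * M ≤ η / 2 := by
    have hc : Continuous fun s : ℝ => s ^ 2 * M := by fun_prop
    have h0 := hc.tendsto 0
    simp only [ne_eq, OfNat.ofNat_ne_zero, not_false_eq_true, zero_pow, zero_mul] at h0
    exact (h0.eventually (gt_mem_nhds (half_pos hη))).mono fun _ h => h.le
  obtain ⟨f, hf⟩ : ∃ f : ℝ → ℝ → CircleDeg1Lift, ∀ s u, f s u = (d.pert b' a s u).F ρ :=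
    ⟨_, fun _ _ => rfl⟩
  have hf0 : f 0 0 = d.F ρ := (hf 0 0).trans (d.F_pert_zero ρ b' a)
  have hcs : ∀ m x, Continuous fun s => (f s 0)^[m] x := by
    intro m x
    have h : Continuous fun s : ℝ => (s, (0 : ℝ)) := by fun_prop
    simp only [hf]
    have h1 := d.continuous_pert_comp ρ b' a m x h
    exact h1
  have hcu : ∀ s m x, Continuous fun u => (f s u)^[m] x := by
    intro s m x
    have h : Continuous fun u : ℝ => (s, u) := by fun_prop
    simp only [hf]
    have h1 := d.continuous_pert_comp ρ b' a m x h
    exact h1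
  obtain ⟨s₁, hs₁, hsmall⟩ : ∃ s₁ > 0, ∀ s ∈ Icc 0 s₁, s ^ 2 * M ≤ η / 2 ∧
      (f s 0)^[k] (1 / 8) ∈ Ioo (r₀ + a) (r₀ + b) ∧ (f s 0)^[k] (3 / 8) ∈ Ioo (r₀ + a) (r₀ + b) := by
    have e1 : ∀ᶠ s in 𝓝 (0 : ℝ), (f s 0)^[k] (1 / 8) ∈ Ioo (r₀ + a) (r₀ + b) := by
      refine (hcs k (1 / 8)).continuousAt.eventually_mem (isOpen_Ioo.mem_nhds ?_)
      rw [hf0]; exact ⟨hau, hu₀.2⟩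
    have e2 : ∀ᶠ s in 𝓝 (0 : ℝ), (f s 0)^[k] (3 / 8) ∈ Ioo (r₀ + a) (r₀ + b) := by
      refine (hcs k (3 / 8)).continuousAt.eventually_mem (isOpen_Ioo.mem_nhds ?_)
      rw [hf0]; exact ⟨hav, hv₀.2⟩
    obtain ⟨ε, hε, h⟩ := Metric.eventually_nhds_iff.1 (hsq.and (e1.and e2))
    refine ⟨ε / 2, half_pos hε, fun s hs => h ?_⟩
    rw [Real.dist_eq, sub_zero, abs_of_nonneg hs.1]; linarith [hs.2]
  -- the perturbed maps are constant on `[a, b]`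
  have hflat : ∀ s, ∀ x ∈ Icc a b, f s 0 x = f s 0 b := by
    intro s x hx
    rw [hf]
    refine (d.pert b' a s 0).F_flat ρ ha0.le (by linarith) (fun z hz => ?_) hx ⟨hab.le, le_rfl⟩
    rw [d.pert_apply, hS.flat z hz.2, bmp_right b' hz.1]; ring
  by_cases hgood : ∃ s ∈ Icc 0 s₁, ∃ (m : ℕ) (r : ℤ), 1 ≤ m ∧ (f s 0)^[m] b ∈ Ioo (r : ℝ) (r + b')
  · left
    obtain ⟨s, hs, m, r, hm, hmem⟩ := hgood
    obtain ⟨hsM, hsu, hsv⟩ := hsmall s hs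
    obtain ⟨m, rfl⟩ : ∃ n, m = n + 1 := ⟨m - 1, by omega⟩
    have hland : ∀ x, (f s 0)^[k] x ∈ Ioo (r₀ + a) (r₀ + b) →
        (f s 0)^[m + 1 + k] x ∈ Ioo ((r + r₀ : ℤ) : ℝ) ((r + r₀ : ℤ) + b') := by
      intro x hx
      have h1 : (f s 0)^[m + 1] ((f s 0)^[k] x - r₀) = (f s 0)^[m + 1] b := by
        rw [Function.iterate_succ_apply, Function.iterate_succ_apply,
          hflat s _ ⟨by linarith [hx.1], by linarith [hx.2]⟩]
      have h2 : (f s 0)^[m + 1 + k] x = (f s 0)^[m + 1] b + r₀ := by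
        rw [Function.iterate_add_apply, ← h1, ← iter_add_int]; simp
      rw [h2]; push_cast
      exact ⟨by linarith [hmem.1], by linarith [hmem.2]⟩
    have e1 : ∀ᶠ u in 𝓝 (0 : ℝ), (f s u)^[m + 1 + k] (1 / 8) ∈
        Ioo ((r + r₀ : ℤ) : ℝ) ((r + r₀ : ℤ) + b') :=
      (hcu s _ _).continuousAt.eventually_mem (isOpen_Ioo.mem_nhds (hland _ hsu))
    have e2 : ∀ᶠ u in 𝓝 (0 : ℝ), (f s u)^[m + 1 + k] (3 / 8) ∈
        Ioo ((r + r₀ : ℤ) : ℝ) ((r + r₀ : ℤ) + b') :=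
      (hcu s _ _).continuousAt.eventually_mem (isOpen_Ioo.mem_nhds (hland _ hsv))
    obtain ⟨u, ⟨huM, hu1, hu2⟩, hu⟩ := (((hsq.and (e1.and e2)).filter_mono
      (nhdsWithin_le_nhds (s := Ioi 0))).and self_mem_nhdsWithin).exists
    have hu : 0 < u := hu
    rw [hf] at hu1 hu2
    refine ⟨d.pert b' a s u, b', ⟨hb'0, by linarith, ?_, ?_, ?_, ⟨m + 1 + k, r + r₀, hu1, hu2⟩⟩,
      min_le_right _ _, ?_, ?_⟩
    · exact (hS.smooth.add (contDiff_const.mul (contDiff_bmp _ _))).add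
        (contDiff_const.mul (contDiff_bmp _ _))
    · intro x hx
      rw [d.pert_apply, hS.flat x (by linarith), bmp_left a hx, bmp_left 2 hx]; ring
    · intro x hx
      have h1 := d.nonneg x
      have h2 := bmp_nonneg b' a x
      have h3 : 0 < bmp b' 2 x := bmp_pos hx.1 (by linarith [hx.2])
      rw [d.pert_apply]; positivity
    · intro x
      have h2 := bmp_nonneg b' a x
      have h3 := bmp_nonneg b' 2 x
      have : 0 ≤ s ^ 2 * bmp b' a x + u ^ 2 * bmp b' 2 x := by positivity
      rw [d.pert_apply]; linarith
    · intro i hi x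
      exact pert_iteratedFDeriv_le (hM1' i hi x) (hM2' i hi x) hsM huM d
  · right
    push Not at hgood
    set e := d.pert b' a s₁ 0 with he
    have hpos : 0 < prim e.w b := by
      have h1 : 0 < prim e.w a - prim e.w b' := by
        rw [prim_sub e.cont]
        refine intervalIntegral.intervalIntegral_pos_of_pos_on (e.cont.intervalIntegrable _ _)
          (fun x hx => ?_) hb'a
        have h1 := d.nonneg x
        have h2 := mul_pos (pow_pos hs₁ 2) (bmp_pos hx.1 hx.2)
        rw [he, d.pert_apply]
        linarith
      have h2 := e.monotone_prim hab.le
      have h3 := e.monotone_prim hb'0.le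
      rw [prim_zero] at h3
      linarith
    have hup : ∀ (m : ℕ) (r : ℤ), m * ρ < r → (e.F ρ)^[m] b ≤ r := by
      intro m r hm
      rcases Nat.eq_zero_or_pos m with rfl | hm0
      · have hr : (0 : ℤ) < r := by
          have : (0 : ℝ) < r := by simpa using hm
          exact_mod_cast this
        have : (1 : ℝ) ≤ r := by exact_mod_cast hr
        simp only [Function.iterate_zero, id]; linarith
      · by_contra! hc
        have h0 : (f 0 0)^[m] b < r := by
          rw [hf0]
          have h00 : d.F ρ b = d.F ρ 0 :=
            d.F_flat ρ (a := 0) (b := b) le_rfl (by linarith) (fun z hz => hS.flat z hz.2)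
              ⟨hb.le, le_rfl⟩ ⟨le_rfl, hb.le⟩
          obtain ⟨n, rfl⟩ : ∃ n, m = n + 1 := ⟨m - 1, by omega⟩
          rw [Function.iterate_succ_apply, h00, ← Function.iterate_succ_apply]
          simpa using d.iter_lt ρ hm 0
        have hc' : (r : ℝ) < (f s₁ 0)^[m] b := by rw [hf]; exact hc
        obtain ⟨y, hy1, hy2⟩ := exists_between (lt_min hc' (by linarith : (r : ℝ) < r + b'))
        obtain ⟨s, hs, hsy⟩ := intermediate_value_Icc hs₁.le (hcs m b).continuousOn
          ⟨(h0.trans hy1).le, (hy2.trans_le (min_le_left _ _)).le⟩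
        simp only at hsy
        refine hgood s hs m r hm0 ⟨hsy ▸ hy1, hsy ▸ hy2.trans_le (min_le_right _ _)⟩
    refine ⟨e, fun x hx => ?_, hpos, fun m r => ⟨fun hm => ?_, fun hm => ?_⟩⟩
    · rw [he, d.pert_apply, bmp_right b' (by linarith : a ≤ x)]; ring
    · simpa using hup m r hm
    · -- an orbit of `0` entering `(0, b)` would be dragged to the wrong side of `0` later on
      by_contra! hc
      obtain ⟨i, j, hij, hji⟩ := exists_nat_mul_near hirr (sub_pos.2 hm)
      have h1 := ((e.F ρ).monotone.iterate i) hc.le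
      rw [iter_add_int, ← Function.iterate_add_apply] at h1
      have h2 := hup i j hij
      have h3 := e.lt_iter ρ (m := i + m) (r := j + r) (by push_cast; linarith) 0
      push_cast at h3
      linarith

/-! ### Repairing a wandering interval of positive image -/

/-- Shift `w` to the left by `b`, and replace what lies beyond `1 - b` by a positive tail of
prescribed mass `j`. -/
lemma exists_tail {w : ℝ → ℝ} {b j : ℝ} (hw : ContDiff ℝ (⊤ : ℕ∞) w) (h0 : ∀ x, 0 ≤ w x)
    (hb : 0 < b) (hb1 : b ≤ 1 / 2) (hflat : ∀ x ≤ b, w x = 0) (hpos : ∀ x ∈ Ioc b 1, 0 < w x)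
    (hj : 0 < j) :
    ∃ v : ℝ → ℝ, ContDiff ℝ (⊤ : ℕ∞) v ∧ (∀ x, 0 ≤ v x) ∧ (∀ x ≤ 0, v x = 0) ∧
      (∀ x ∈ Ioc (0 : ℝ) 1, 0 < v x) ∧ (∀ x ≤ 1 - b, v x = w (x + b)) ∧
      ∫ x in (1 - b)..1, v x = j := by
  obtain ⟨M, hM⟩ := (isCompact_Icc (a := (0 : ℝ)) (b := 2)).exists_bound_of_continuousOn
    hw.continuous.continuousOn
  have hM0 : 0 ≤ M := (norm_nonneg _).trans (hM 0 ⟨le_rfl, by norm_num⟩)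
  obtain ⟨ε, hε, hεb, hεM⟩ : ∃ ε, 0 < ε ∧ ε ≤ b ∧ M * ε < j := by
    refine ⟨min b (j / (M + 1)), lt_min hb (by positivity), min_le_left _ _, ?_⟩
    have h1 : min b (j / (M + 1)) ≤ j / (M + 1) := min_le_right _ _
    have h2 : 0 < j / (M + 1) := by positivity
    have h3 : (M + 1) * (j / (M + 1)) = j := by field_simp
    nlinarith
  obtain ⟨g, hg⟩ : ∃ g : ℝ → ℝ, ∀ x, g x = w (x + b) * Real.smoothTransition ((1 - b - x) / ε + 1) :=
    ⟨_, fun _ => rfl⟩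
  have hgs : ContDiff ℝ (⊤ : ℕ∞) g := by
    rw [funext hg]
    refine (hw.comp (contDiff_id.add contDiff_const)).mul (Real.smoothTransition.contDiff.comp ?_)
    exact ((contDiff_const.sub contDiff_id).div_const _).add contDiff_const
  have hg0 : ∀ x, 0 ≤ g x := fun x => by
    rw [hg]; exact mul_nonneg (h0 _) (Real.smoothTransition.nonneg _)
  have hgl : ∀ x ≤ 1 - b, g x = w (x + b) := fun x hx => by
    have : 0 ≤ (1 - b - x) / ε := div_nonneg (by linarith) hε.le
    rw [hg, Real.smoothTransition.one_of_one_le (by linarith), mul_one]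
  have hgr : ∀ x, 1 - b + ε ≤ x → g x = 0 := fun x hx => by
    have : (1 - b - x) / ε ≤ -1 := by rw [div_le_iff₀ hε]; linarith
    rw [hg, Real.smoothTransition.zero_of_nonpos (by linarith), mul_zero]
  have hI0 : ∫ x in (1 - b)..1, g x ≤ M * ε := by
    rw [← intervalIntegral.integral_add_adjacent_intervals (b := 1 - b + ε)
      (hgs.continuous.intervalIntegrable _ _) (hgs.continuous.intervalIntegrable _ _)]
    have h2 : ∫ x in (1 - b + ε)..1, g x = 0 := by
      refine (intervalIntegral.integral_congr (g := fun _ => 0) fun z hz => ?_).trans (by simp)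
      rw [uIcc_of_le (by linarith)] at hz
      exact hgr z hz.1
    have h1 := intervalIntegral.norm_integral_le_of_norm_le_const (a := 1 - b) (b := 1 - b + ε)
      (f := g) (C := M) fun x hx => by
        rw [uIoc_of_le (by linarith)] at hx
        have h3 := hM (x + b) ⟨by linarith [hx.1], by linarith [hx.2]⟩
        rw [hg, norm_mul, Real.norm_of_nonneg (Real.smoothTransition.nonneg _)]
        have := Real.smoothTransition.le_one ((1 - b - x) / ε + 1)
        have := Real.smoothTransition.nonneg ((1 - b - x) / ε + 1)
        nlinarith [norm_nonneg (w (x + b))]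
    rw [show 1 - b + ε - (1 - b) = ε by ring, abs_of_pos hε] at h1
    linarith [Real.le_norm_self (∫ x in (1 - b)..(1 - b + ε), g x)]
  have hbc := (contDiff_bmp (1 - b) 2).continuous
  have hB : 0 < ∫ x in (1 - b)..1, bmp (1 - b) 2 x :=
    intervalIntegral.intervalIntegral_pos_of_pos_on (hbc.intervalIntegrable _ _)
      (fun x hx => bmp_pos hx.1 (by linarith [hx.2])) (by linarith)
  obtain ⟨κ, hκ0, hκ⟩ : ∃ κ, 0 < κ ∧ (∫ x in (1 - b)..1, g x) +
      κ * ∫ x in (1 - b)..1, bmp (1 - b) 2 x = j := by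
    refine ⟨(j - ∫ x in (1 - b)..1, g x) / ∫ x in (1 - b)..1, bmp (1 - b) 2 x,
      div_pos (by linarith) hB, ?_⟩
    field_simp; ring
  refine ⟨fun x => g x + κ * bmp (1 - b) 2 x, hgs.add (contDiff_const.mul (contDiff_bmp _ _)),
    fun x => ?_, fun x hx => ?_, fun x hx => ?_, fun x hx => ?_, ?_⟩
  · exact add_nonneg (hg0 x) (mul_nonneg hκ0.le (bmp_nonneg _ _ _))
  · simp only
    rw [hgl x (by linarith), hflat _ (by linarith), bmp_left 2 (by linarith)]; ring
  · rcases le_or_gt x (1 - b) with h | h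
    · simp only
      rw [hgl x h]
      have := hpos (x + b) ⟨by linarith [hx.1], by linarith⟩
      have := mul_nonneg hκ0.le (bmp_nonneg (1 - b) 2 x)
      linarith
    · have := mul_pos hκ0 (bmp_pos (c := 2) h (by linarith [hx.2]))
      have := hg0 x
      simp only; linarith
  · simp only
    rw [hgl x hx, bmp_left 2 hx]; ring
  · have hkc : Continuous fun x => κ * bmp (1 - b) 2 x := continuous_const.mul hbc
    rw [intervalIntegral.integral_add (hgs.continuous.intervalIntegrable _ _)
      (hkc.intervalIntegrable _ _), intervalIntegral.integral_const_mul, hκ]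

/-- If `(0, b)` wanders under a map giving it an image of positive length, then the map can be
rewritten on `(0, b)` without affecting the wandering. After `b` has been shifted to the origin, this
interval is `(1 - b, 1)` modulo `1`, and there the density is replaced by a positive smooth
continuation of equal mass. -/
theorem final_of_wand {ρ : ℝ} (hirr : Irrational ρ) {d e : Dens} {b : ℝ} (hS : Stage ρ d b)
    (he : ∀ x, b ≤ x → e.w x = d.w x) (hj : 0 < prim e.w b) (hW : Wand ρ (e.F ρ) 0 b) :
    Final ρ := by
  have hb := hS.pos
  have hb1 := hS.le
  obtain ⟨v, hvs, hv0, hvl, hvp, hvw, hvj⟩ := exists_tail hS.smooth d.nonneg hb hb1 hS.flat hS.wpos hj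
  have hvc := hvs.continuous
  have hpv : ∀ x ∈ Icc 0 (1 - b), prim v x = prim e.w (x + b) - prim e.w b := by
    intro x hx
    rw [prim_sub e.cont, prim, intervalIntegral.integral_congr (g := fun y => e.w (y + b))]
    · rw [intervalIntegral.integral_comp_add_right, zero_add]
    · intro y hy
      rw [uIcc_of_le hx.1] at hy
      simp only
      rw [hvw y (hy.2.trans hx.2), he _ (by linarith [hy.1])]
  have hp1 : prim v 1 = prim e.w 1 := by
    have h1 := prim_sub hvc (1 - b) 1
    rw [hvj, hpv (1 - b) ⟨by linarith, le_rfl⟩, sub_add_cancel] at h1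
    linarith
  let d' : Dens := ⟨v, hvc, hv0, by have := e.prim_one_pos; rw [← hp1] at this; exact this⟩
  obtain ⟨f, hf⟩ : ∃ f : CircleDeg1Lift, f = d'.lift (e.F ρ b - b) := ⟨_, rfl⟩
  have hfe : ∀ x, (∃ n : ℤ, b + n ≤ x ∧ x ≤ 1 + n) → f (x - b) = e.F ρ x - b := by
    rintro x ⟨n, h1, h2⟩
    have key : f (x - n - b) = e.F ρ (x - n) - b := by
      rw [hf, d'.lift_apply, d'.phi_eq ⟨by linarith, by linarith⟩]
      change e.F ρ b - b + prim v _ / prim v 1 = _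
      rw [hpv _ ⟨by linarith, by linarith⟩, hp1, sub_add_cancel, e.F_apply, e.F_apply,
        e.phi_eq ⟨hb.le, by linarith⟩, e.phi_eq ⟨by linarith, by linarith⟩]
      ring
    rw [show x - n - b = x - b - n by ring, f.map_sub_int, CircleDeg1Lift.map_sub_int] at key
    linarith
  -- the orbit of the interval `(0, b)` avoids all its integer translates
  have hgood : ∀ m : ℕ, (∃ n : ℤ, b + n ≤ (e.F ρ)^[m] 0 ∧ (e.F ρ)^[m] 0 ≤ 1 + n) ∧
      ∃ n : ℤ, b + n ≤ (e.F ρ)^[m] b ∧ (e.F ρ)^[m] b ≤ 1 + n := by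
    intro m
    rcases Nat.eq_zero_or_pos m with rfl | hm
    · refine ⟨⟨-1, ?_⟩, ⟨0, ?_⟩⟩ <;> push_cast <;>
        simp only [Function.iterate_zero, id] <;> constructor <;> linarith
    · have hne : (⌊(m : ℝ) * ρ⌋ : ℝ) ≠ m * ρ := fun h =>
        (hirr.natCast_mul hm.ne').ne_int _ h.symm
      have h1 := (hW m ⌊(m : ℝ) * ρ⌋).2 (lt_of_le_of_ne (Int.floor_le _) hne)
      have h2 := (hW m (⌊(m : ℝ) * ρ⌋ + 1)).1 (by push_cast; exact Int.lt_floor_add_one _)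
      have h3 := (e.F ρ).monotone.iterate m hb.le
      push_cast at h2
      exact ⟨⟨_, h1, by linarith⟩, ⟨_, h1.trans h3, by linarith⟩⟩
  have hit : ∀ m : ℕ, f^[m] (-b) = (e.F ρ)^[m] 0 - b ∧ f^[m] 0 = (e.F ρ)^[m] b - b := by
    intro m
    induction m with
    | zero => simp
    | succ m ih =>
      simp only [Function.iterate_succ_apply', ih.1, ih.2]
      exact ⟨hfe _ (hgood m).1, hfe _ (hgood m).2⟩
  refine ⟨d', hvs, hvl, hvp, e.F ρ b - b, -b, 0, by linarith, by linarith, fun m r => ?_⟩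
  have hc : (fun x => e.F ρ b - b + phi d'.w x) = f := by rw [hf]; rfl
  rw [hc, (hit m).1, (hit m).2]
  refine ⟨fun h => ?_, fun h => ?_⟩
  · have := (hW m r).1 h; linarith
  · have := (hW m r).2 h; linarith

/-! ### The limit of the construction -/

/-- The first stage: `[1/8, 3/8]` already lies in the flat interval `[0, 1/2]`. -/
lemma exists_stage (ρ : ℝ) : ∃ (d : Dens) (b : ℝ), Stage ρ d b := by
  have hc := (contDiff_bmp (1 / 2) 2).continuous
  have hpos : 0 < ∫ x in (0 : ℝ)..1, bmp (1 / 2) 2 x := by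
    rw [← intervalIntegral.integral_add_adjacent_intervals (b := 1 / 2)
      (hc.intervalIntegrable _ _) (hc.intervalIntegrable _ _)]
    have h1 : 0 ≤ ∫ x in (0 : ℝ)..(1 / 2), bmp (1 / 2) 2 x :=
      intervalIntegral.integral_nonneg (by norm_num) fun x _ => bmp_nonneg _ _ _
    have h2 : 0 < ∫ x in (1 / 2 : ℝ)..1, bmp (1 / 2) 2 x :=
      intervalIntegral.intervalIntegral_pos_of_pos_on (hc.intervalIntegrable _ _)
        (fun x hx => bmp_pos hx.1 (by linarith [hx.2])) (by norm_num)
    linarith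
  refine ⟨⟨bmp (1 / 2) 2, hc, bmp_nonneg _ _, hpos⟩, 1 / 2, by norm_num, le_rfl,
    contDiff_bmp _ _, fun x hx => bmp_left _ hx, fun x hx => bmp_pos hx.1 (by linarith [hx.2]),
    0, 0, ?_, ?_⟩ <;> norm_num

/-- If infinitely many stages can be carried out, with increments summable in every `C^k` norm, the
limit density is smooth, its zero set has shrunk to the origin, and the wandering interval
`(1/8, 3/8)` common to all stages survives. -/
theorem final_of_steps {ρ : ℝ} (h : ∀ (d : Dens) (b : ℝ), Stage ρ d b → ∀ n : ℕ,
    ∃ (d' : Dens) (b' : ℝ), Stage ρ d' b' ∧ b' ≤ (1 / 2) ^ n ∧ (∀ x, d.w x ≤ d'.w x) ∧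
      ∀ i ≤ n, ∀ x, ‖iteratedFDeriv ℝ i (fun y => d'.w y - d.w y) x‖ ≤ (1 / 2) ^ n) :
    Final ρ := by
  obtain ⟨d₀, b₀, h₀⟩ := exists_stage ρ
  choose D B hS hB hD hI using h
  let S : ℕ → {p : Dens × ℝ // Stage ρ p.1 p.2} := fun n => Nat.rec ⟨(d₀, b₀), h₀⟩
    (fun n p => ⟨(D p.1.1 p.1.2 p.2 n, B p.1.1 p.1.2 p.2 n), hS _ _ _ _⟩) n
  obtain ⟨d, hd⟩ : ∃ d : ℕ → Dens, ∀ n, d n = (S n).1.1 := ⟨_, fun _ => rfl⟩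
  obtain ⟨b, hb⟩ : ∃ b : ℕ → ℝ, ∀ n, b n = (S n).1.2 := ⟨_, fun _ => rfl⟩
  have hst : ∀ n, Stage ρ (d n) (b n) := fun n => by rw [hd, hb]; exact (S n).2
  have hbn : ∀ n, b (n + 1) ≤ (1 / 2) ^ n := fun n => by rw [hb]; exact hB _ _ _ n
  have hdm : ∀ n x, (d n).w x ≤ (d (n + 1)).w x := fun n => by rw [hd, hd]; exact hD _ _ _ n
  have hdi : ∀ n, ∀ i ≤ n, ∀ x,
      ‖iteratedFDeriv ℝ i (fun y => (d (n + 1)).w y - (d n).w y) x‖ ≤ (1 / 2) ^ n := fun n => by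
    rw [hd, hd]; exact hI _ _ _ n
  clear_value S
  have hsum : Summable fun n : ℕ => (1 / 2 : ℝ) ^ n := summable_geometric_two
  obtain ⟨w, hw⟩ : ∃ w : ℝ → ℝ, ∀ x, w x = (d 0).w x + ∑' n, ((d (n + 1)).w x - (d n).w x) :=
    ⟨_, fun _ => rfl⟩
  have hws : ContDiff ℝ (⊤ : ℕ∞) w := by
    rw [funext hw]
    refine (hst 0).smooth.add (contDiff_tsum_of_eventually (v := fun _ n => (1 / 2 : ℝ) ^ n)
      (fun n => (hst (n + 1)).smooth.sub (hst n).smooth) (fun _ _ => hsum) fun k _ => ?_)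
    rw [Nat.cofinite_eq_atTop]
    filter_upwards [eventually_ge_atTop k] with n hn x
    exact hdi n k hn x
  have hunif : TendstoUniformly (fun n => (d n).w) w atTop := by
    have h1 := tendstoUniformly_tsum_nat (f := fun n x => (d (n + 1)).w x - (d n).w x) hsum
      fun n x => by
        have := hdi n 0 (Nat.zero_le _) x
        rwa [norm_iteratedFDeriv_zero] at this
    rw [Metric.tendstoUniformly_iff] at h1 ⊢
    intro ε hε
    filter_upwards [h1 ε hε] with n hn x
    have h2 := hn x
    rw [Finset.sum_range_sub (fun n => (d n).w x), Real.dist_eq] at h2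
    rw [Real.dist_eq, hw]
    convert h2 using 2; ring
  have hlim : ∀ x, Tendsto (fun n => (d n).w x) atTop (𝓝 (w x)) := fun x => hunif.tendsto_at x
  have hmono : ∀ x, Monotone fun n => (d n).w x := fun x => monotone_nat_of_le_succ fun n => hdm n x
  have hge : ∀ n x, (d n).w x ≤ w x := fun n x => (hmono x).ge_of_tendsto (hlim x) n
  have hw0 : ∀ x, 0 ≤ w x := fun x => ((d 0).nonneg x).trans (hge 0 x)
  have hwpos : ∀ x ∈ Ioc (0 : ℝ) 1, 0 < w x := by
    intro x hx
    obtain ⟨n, hn⟩ := exists_pow_lt_of_lt_one hx.1 (by norm_num : (1 / 2 : ℝ) < 1)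
    exact ((hst (n + 1)).wpos x ⟨(hbn n).trans_lt hn, hx.2⟩).trans_le (hge _ x)
  have hwint : 0 < ∫ x in (0 : ℝ)..1, w x :=
    intervalIntegral.intervalIntegral_pos_of_pos_on (hws.continuous.intervalIntegrable _ _)
      (fun x hx => hwpos x ⟨hx.1, hx.2.le⟩) zero_lt_one
  let e : Dens := ⟨w, hws.continuous, hw0, hwint⟩
  have hF : ∀ m x, Tendsto (fun n => ((d n).F ρ)^[m] x) atTop (𝓝 ((e.F ρ)^[m] x)) := fun m x =>
    Dens.tendsto_iter ρ (d := e) hunif.tendstoUniformlyOn m x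
  refine ⟨e, hws, fun x hx => ?_, hwpos, e.tt ρ, 1 / 8, 3 / 8, by norm_num, by norm_num, fun m r =>
    ⟨fun hm => ?_, fun hm => ?_⟩⟩
  · refine tendsto_nhds_unique (hlim x) ?_
    simp only [fun n => (hst n).flat x (hx.trans (hst n).pos.le)]
    exact tendsto_const_nhds
  · exact le_of_tendsto (hF m _) (Eventually.of_forall fun n => ((hst n).wand m r).1 hm)
  · exact ge_of_tendsto (hF m _) (Eventually.of_forall fun n => ((hst n).wand m r).2 hm)

theorem final {ρ : ℝ} (hirr : Irrational ρ) : Final ρ := by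
  by_cases hbad : ∃ (d : Dens) (b : ℝ), Stage ρ d b ∧ ∃ e : Dens, (∀ x, b ≤ x → e.w x = d.w x) ∧
      0 < prim e.w b ∧ Wand ρ (e.F ρ) 0 b
  · obtain ⟨d, b, hS, e, he, hj, hW⟩ := hbad
    exact final_of_wand hirr hS he hj hW
  · refine final_of_steps fun d b hS n => ?_
    exact (step hirr hS (by positivity) n).resolve_right fun h => hbad ⟨d, b, hS, h⟩

/-! ### Passing to the circle -/

lemma coe_eq_coe_iff {x y : ℝ} :
    (x : AddCircle (1 : ℝ)) = y ↔ ∃ r : ℤ, y = x + r := by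
  rw [eq_comm, QuotientAddGroup.eq_iff_sub_mem, AddSubgroup.mem_zmultiples_iff]
  simp only [zsmul_eq_mul, mul_one]
  exact exists_congr fun r => ⟨fun h => by linarith, fun h => by linarith⟩

/-- A continuous, strictly increasing degree one lift induces a circle homeomorphism. -/
lemma exists_homeo (F : CircleDeg1Lift) (hc : Continuous F) (hs : StrictMono F) :
    ∃ f : AddCircle (1 : ℝ) ≃ₜ AddCircle (1 : ℝ), ∀ x : ℝ,
      (F x : AddCircle (1 : ℝ)) = f (x : AddCircle (1 : ℝ)) := by
  have hp : Function.Periodic (fun x : ℝ => (F x : AddCircle (1 : ℝ))) 1 := fun x => by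
    simp only [F.map_add_one]
    exact coe_eq_coe_iff.2 ⟨-1, by push_cast; ring⟩
  have hl : ∀ x : ℝ, hp.lift (x : AddCircle (1 : ℝ)) = (F x : AddCircle (1 : ℝ)) := fun x =>
    hp.lift_coe x
  have hcont : Continuous hp.lift := by
    refine continuous_coinduced_dom.2 ?_
    exact (AddCircle.continuous_mk' 1).comp hc
  have hbij : Function.Bijective hp.lift := by
    constructor
    · intro a b
      induction a using QuotientAddGroup.induction_on with | H x => ?_
      induction b using QuotientAddGroup.induction_on with | H y => ?_
      intro h
      obtain ⟨r, hr⟩ := coe_eq_coe_iff.1 ((hl x).symm.trans (h.trans (hl y)))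
      rw [← F.map_add_int] at hr
      exact coe_eq_coe_iff.2 ⟨r, hs.injective hr⟩
    · intro b
      induction b using QuotientAddGroup.induction_on with | H y => ?_
      obtain ⟨x, hx⟩ := hc.surjective F.tendsto_atTop F.tendsto_atBot y
      exact ⟨(x : AddCircle (1 : ℝ)), by rw [hl, hx]⟩
  exact ⟨Continuous.homeoOfEquivCompactToT2 (f := Equiv.ofBijective _ hbij) hcont,
    fun x => (hl x).symm⟩

/-- By Poincaré recurrence a rotation has no wandering open set. -/
lemma not_conj {f : AddCircle (1 : ℝ) → AddCircle (1 : ℝ)} {I : Set (AddCircle (1 : ℝ))}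
    (hI : IsWanderingInterval f I) (ρ : AddCircle (1 : ℝ)) :
    ¬ ∃ h : AddCircle (1 : ℝ) ≃ₜ AddCircle (1 : ℝ), ∀ x, h (f x) = h x + ρ := by
  rintro ⟨h, hh⟩
  obtain ⟨⟨a, b, hab, -, hIab⟩, hdis⟩ := hI
  have hopen : IsOpen I := by
    rw [hIab]; exact QuotientAddGroup.isOpenMap_coe _ isOpen_Ioo
  have hne : I.Nonempty := by
    rw [hIab]; exact (nonempty_Ioo.2 hab).image _
  have ho : IsOpen (h '' I) := h.isOpenMap _ hopen
  have hmp : MeasureTheory.MeasurePreserving (fun x : AddCircle (1 : ℝ) => x + ρ)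
      MeasureTheory.volume MeasureTheory.volume := MeasureTheory.measurePreserving_add_right _ ρ
  obtain ⟨_, ⟨x, hx, rfl⟩, m, hm, y, hy, hyx⟩ := hmp.exists_mem_iterate_mem
    ho.measurableSet.nullMeasurableSet (ho.measure_pos _ (hne.image _)).ne'
  have hsemi : ∀ n, h (f^[n] x) = (fun x => x + ρ)^[n] (h x) := by
    intro n
    induction n with
    | zero => rfl
    | succ n ih => rw [Function.iterate_succ_apply', Function.iterate_succ_apply', hh, ih]
  rw [← hsemi] at hyx
  have hyx' := h.injective hyx
  have : y ∈ f^[0] '' I ∩ f^[m] '' I := ⟨⟨y, hy, rfl⟩, ⟨x, hx, hyx'.symm⟩⟩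
  rw [hdis 0 m hm.symm] at this
  exact this

lemma Dens.strictMono_phi (d : Dens) (h : ∀ x ∈ Ioc (0 : ℝ) 1, 0 < d.w x) :
    StrictMono (phi d.w) := by
  have hlt : ∀ x ∈ Icc (0 : ℝ) 1, ∀ y ∈ Icc (0 : ℝ) 1, x < y →
      prim d.w x / prim d.w 1 < prim d.w y / prim d.w 1 := by
    intro x hx y hy hxy
    refine div_lt_div_of_pos_right ?_ d.prim_one_pos
    rw [← sub_pos, prim_sub d.cont]
    exact intervalIntegral.intervalIntegral_pos_of_pos_on (d.cont.intervalIntegrable _ _)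
      (fun z hz => h z ⟨hx.1.trans_lt hz.1, hz.2.le.trans hy.2⟩) hxy
  intro x y hxy
  rcases (Int.floor_mono hxy.le).lt_or_eq with hf | hf
  · have h' : (⌊x⌋ : ℝ) + 1 ≤ ⌊y⌋ := by exact_mod_cast hf
    have h1 := hlt _ (fract_mem x) 1 ⟨zero_le_one, le_rfl⟩ (Int.fract_lt_one x)
    rw [div_self d.prim_one_pos.ne'] at h1
    have h2 := (d.ratio_mem (fract_mem y)).1
    simp only [phi]; linarith
  · have h1 := hlt _ (fract_mem x) _ (fract_mem y)
      (by rw [Int.fract, Int.fract, hf]; linarith)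
    simp only [phi, hf]; linarith

/-- The wandering inequalities keep `f^m u` within bounded distance of `u + mρ`. -/
lemma Wand.translationNumber {ρ u v : ℝ} (hirr : Irrational ρ) {f : CircleDeg1Lift}
    (hW : Wand ρ f u v) (huv : u ≤ v) : f.translationNumber = ρ := by
  refine tendsto_nhds_unique (f.tendsto_translationNumber u) ?_
  have hb : ∀ m : ℕ, 1 ≤ m → |(f ^ m) u - u - m * ρ| ≤ 1 := by
    intro m hm
    rw [CircleDeg1Lift.coe_pow]
    have hne : (⌊(m : ℝ) * ρ⌋ : ℝ) ≠ m * ρ := fun h =>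
      (hirr.natCast_mul (by omega)).ne_int _ h.symm
    have h1 := (hW m ⌊(m : ℝ) * ρ⌋).2 (lt_of_le_of_ne (Int.floor_le _) hne)
    have h2 := (hW m (⌊(m : ℝ) * ρ⌋ + 1)).1 (by push_cast; exact Int.lt_floor_add_one _)
    have h3 := f.monotone.iterate m huv
    have h4 := Int.floor_le ((m : ℝ) * ρ)
    have h5 := Int.lt_floor_add_one ((m : ℝ) * ρ)
    push_cast at h2
    rw [abs_le]; constructor <;> linarith
  rw [tendsto_iff_dist_tendsto_zero]
  refine squeeze_zero' (Eventually.of_forall fun _ => dist_nonneg) ?_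
    tendsto_one_div_atTop_nhds_zero_nat
  filter_upwards [eventually_ge_atTop 1] with m hm
  have hm0 : (0 : ℝ) < m := by exact_mod_cast hm
  rw [Real.dist_eq, show ((f ^ m) u - u) / m - ρ = ((f ^ m) u - u - m * ρ) / m by field_simp,
    abs_div, abs_of_pos hm0]
  gcongr
  exact hb m hm

end FlatDenjoy

open FlatDenjoy Set Topology

/-- main theorem: for every irrational `ρ ∈ [0,1)` and every
point `p` of the circle there is a circle homeomorphism `f` with rotation
number `ρ` which is piecewise `C^∞`, a `C^∞` diffeomorphism away from `p`, has
`p` as a flat half-critical point (positive left derivative, all right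
derivatives vanish), and has a wandering interval; in particular `f` is not
topologically conjugate to the rotation `R_ρ`. -/
theorem denjoy_counterexample_with_flat_half_critical_point
    (ρ : ℝ) (hmem : ρ ∈ Set.Ico (0:ℝ) 1) (hirr : Irrational ρ)
    (p : AddCircle (1 : ℝ)) :
    ∃ (f : AddCircle (1 : ℝ) ≃ₜ AddCircle (1 : ℝ)) (F : ℝ → ℝ) (p₀ : ℝ),
      (p₀ : AddCircle (1 : ℝ)) = p ∧
      -- `F` is a lift of `f`, continuous, non-decreasing, degree one
      Continuous F ∧ Monotone F ∧ (∀ x : ℝ, F (x + 1) = F x + 1) ∧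
      (∀ x : ℝ, ((F x : AddCircle (1 : ℝ))) = f (x : AddCircle (1 : ℝ))) ∧
      -- rotation number `ρ`
      (∀ x : ℝ, Tendsto (fun n : ℕ => (F^[n] x - x) / n) atTop (nhds ρ)) ∧
      -- piecewise `C^∞`, smooth up to `p` from each side
      ContDiffOn ℝ (⊤ : ℕ∞) F (Set.Ico p₀ (p₀ + 1)) ∧
      ContDiffOn ℝ (⊤ : ℕ∞) F (Set.Ioc p₀ (p₀ + 1)) ∧
      -- `C^∞` diffeomorphism on the complement of `p`: nonvanishing derivative
      (∀ x ∈ Set.Ioo p₀ (p₀ + 1), 0 < deriv F x) ∧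
      -- `p` is a flat half-critical point
      (∃ c : ℝ, 0 < c ∧ HasDerivWithinAt F c (Set.Iic p₀) p₀) ∧
      (∀ k : ℕ, 1 ≤ k → iteratedDerivWithin k F (Set.Ici p₀) p₀ = 0) ∧
      -- wandering interval
      (∃ I : Set (AddCircle (1 : ℝ)), IsWanderingInterval (⇑f) I) ∧
      -- not topologically conjugate to the rotation `R_ρ`
      ¬ ∃ h : AddCircle (1 : ℝ) ≃ₜ AddCircle (1 : ℝ),
          ∀ x : AddCircle (1 : ℝ), h (f x) = h x + (ρ : AddCircle (1 : ℝ)) := by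
  obtain ⟨d, hs, hflat, hpos, t, u, v, huv, huv1, hW⟩ := final hirr
  obtain ⟨p₀, rfl⟩ := QuotientAddGroup.mk_surjective p
  obtain ⟨g, hg⟩ : ∃ g : CircleDeg1Lift, g = d.lift t := ⟨_, rfl⟩
  have hgW : Wand ρ g u v := by rw [hg]; exact hW
  have hgx : ∀ x, g x = t + phi d.w x := fun x => by rw [hg]; rfl
  obtain ⟨F, hF⟩ : ∃ F : CircleDeg1Lift, ∀ x, F x = p₀ + g (x - p₀) :=
    ⟨⟨⟨fun x => p₀ + g (x - p₀), fun x y h => add_le_add_right (g.monotone (by linarith)) p₀⟩,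
      fun x => by
        change p₀ + g (x + 1 - p₀) = p₀ + g (x - p₀) + 1
        rw [show x + 1 - p₀ = x - p₀ + 1 by ring, g.map_add_one]; ring⟩, fun _ => rfl⟩
  have hFc : Continuous F := by
    rw [show (F : ℝ → ℝ) = fun x => p₀ + (t + phi d.w (x - p₀)) from funext fun x => by rw [hF, hgx]]
    exact continuous_const.add (continuous_const.add
      (d.continuous_phi.comp (continuous_id.sub continuous_const)))
  have hFs : StrictMono F := fun x y h => by
    rw [hF, hF, hgx, hgx]
    have := d.strictMono_phi hpos (sub_lt_sub_right h p₀)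
    linarith
  have hFit : ∀ n x, F^[n] x = p₀ + g^[n] (x - p₀) := by
    intro n x
    induction n with
    | zero => simp
    | succ n ih => rw [Function.iterate_succ_apply', Function.iterate_succ_apply', ih, hF,
        add_sub_cancel_left]
  obtain ⟨f, hf⟩ := exists_homeo F hFc hFs
  have hfit : ∀ n (x : ℝ), f^[n] (x : AddCircle (1 : ℝ)) = (F^[n] x : ℝ) := by
    intro n x
    induction n with
    | zero => rfl
    | succ n ih => rw [Function.iterate_succ_apply', Function.iterate_succ_apply', ih, hf]
  -- on `[p₀, p₀ + 1]` the lift agrees with the smooth function `G`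
  obtain ⟨G, hG⟩ : ∃ G : ℝ → ℝ, ∀ x, G x = p₀ + (t + prim d.w (x - p₀) / prim d.w 1) :=
    ⟨_, fun _ => rfl⟩
  have hFG : ∀ x ∈ Icc p₀ (p₀ + 1), F x = G x := fun x hx => by
    rw [hF, hgx, hG, d.phi_eq ⟨by linarith [hx.1], by linarith [hx.2]⟩]
  have hGs : ContDiff ℝ (⊤ : ℕ∞) G := by
    rw [funext hG]
    exact contDiff_const.add (contDiff_const.add
      (((contDiff_prim hs).comp (contDiff_id.sub contDiff_const)).div_const _))
  have hGd : ∀ x, HasDerivAt G (d.w (x - p₀) / prim d.w 1) x := fun x => by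
    rw [funext hG]
    exact ((((hasDerivAt_prim d.cont (x - p₀)).comp_sub_const x p₀).div_const _).const_add
      t).const_add p₀
  have hwand : IsWanderingInterval f
      ((fun x : ℝ => (x : AddCircle (1 : ℝ))) '' Ioo (p₀ + u) (p₀ + v)) := by
    have key : ∀ n k : ℕ, 1 ≤ k → ∀ x ∈ Ioo (p₀ + u) (p₀ + v), ∀ y ∈ Ioo (p₀ + u) (p₀ + v),
        f^[n] (x : AddCircle (1 : ℝ)) ≠ f^[n + k] (y : AddCircle (1 : ℝ)) := by
      intro n k hk x hx y hy h
      rw [Function.iterate_add_apply] at h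
      have h1 := f.injective.iterate n h
      rw [hfit] at h1
      obtain ⟨r, hr⟩ := coe_eq_coe_iff.1 h1
      have h2 := (hFs.monotone.iterate k) hy.1.le
      have h3 := (hFs.monotone.iterate k) hy.2.le
      rw [hFit, add_sub_cancel_left] at h2
      rw [hFit k (p₀ + v), add_sub_cancel_left] at h3
      rcases lt_or_gt_of_ne ((hirr.natCast_mul (show k ≠ 0 by omega)).ne_int r) with hlt | hlt
      · linarith [(hgW k r).1 hlt, hx.1]
      · linarith [(hgW k r).2 hlt, hx.2]
    refine ⟨⟨p₀ + u, p₀ + v, by linarith, by linarith, rfl⟩, fun n m hnm => ?_⟩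
    rw [eq_empty_iff_forall_notMem]
    rintro z ⟨⟨_, ⟨x, hx, rfl⟩, hxz⟩, ⟨_, ⟨y, hy, rfl⟩, hyz⟩⟩
    rcases lt_or_gt_of_ne hnm with h | h
    · obtain ⟨k, rfl⟩ := Nat.exists_eq_add_of_lt h
      exact key n (k + 1) (by omega) x hx y hy (hxz.trans hyz.symm)
    · obtain ⟨k, rfl⟩ := Nat.exists_eq_add_of_lt h
      exact key m (k + 1) (by omega) y hy x hx (hyz.trans hxz.symm)
  refine ⟨f, F, p₀, rfl, hFc, hFs.monotone, F.map_add_one, hf, fun x => ?_, ?_, ?_, fun x hx => ?_,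
    ⟨d.w 1 / prim d.w 1, div_pos (hpos 1 ⟨zero_lt_one, le_rfl⟩) d.prim_one_pos, ?_⟩,
    fun k hk => ?_, ⟨_, hwand⟩, not_conj hwand _⟩
  · have h := g.tendsto_translationNumber (x - p₀)
    rw [hgW.translationNumber hirr huv.le] at h
    refine h.congr fun n => ?_
    rw [CircleDeg1Lift.coe_pow, hFit]; ring
  · exact hGs.contDiffOn.congr fun x hx => hFG x ⟨hx.1, hx.2.le⟩
  · exact hGs.contDiffOn.congr fun x hx => hFG x ⟨hx.1.le, hx.2⟩
  · have he : F =ᶠ[𝓝 x] G := by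
      filter_upwards [Ioo_mem_nhds hx.1 hx.2] with y hy
      exact hFG y ⟨hy.1.le, hy.2.le⟩
    rw [he.deriv_eq, (hGd x).deriv]
    exact div_pos (hpos _ ⟨by linarith [hx.1], by linarith [hx.2]⟩) d.prim_one_pos
  · -- to the left of `p₀`, `F` is `G` on the period `[p₀, p₀ + 1]` shifted by one
    have h1 : HasDerivAt (fun x => G (x + 1) - 1) (d.w 1 / prim d.w 1) p₀ := by
      have := (hGd (p₀ + 1)).comp_add_const p₀ 1
      rw [add_sub_cancel_left] at this
      exact this.sub_const 1
    have he : ∀ x ∈ Icc (p₀ - 1) p₀, F x = G (x + 1) - 1 := fun x hx => by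
      rw [← hFG _ ⟨by linarith [hx.1], by linarith [hx.2]⟩, F.map_add_one]; ring
    refine h1.hasDerivWithinAt.congr_of_eventuallyEq ?_ (he p₀ ⟨by linarith, le_rfl⟩)
    filter_upwards [Icc_mem_nhdsLE (show p₀ - 1 < p₀ by linarith)] with x hx using he x hx
  · -- all derivatives of `G` at `p₀` may be computed from the left, where `G` is constant
    have he : F =ᶠ[𝓝[Ici p₀] p₀] G := by
      filter_upwards [Icc_mem_nhdsGE (show p₀ < p₀ + 1 by linarith)] with x hx using hFG x hx
    have hGk : ContDiffAt ℝ k G p₀ := (hGs.of_le (by exact_mod_cast le_top)).contDiffAt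
    rw [he.iteratedDerivWithin_eq (hFG p₀ ⟨le_rfl, by linarith⟩),
      iteratedDerivWithin_eq_iteratedDeriv (uniqueDiffOn_Ici p₀) hGk self_mem_Ici,
      ← iteratedDerivWithin_eq_iteratedDeriv (uniqueDiffOn_Iic p₀) hGk self_mem_Iic]
    have hc : EqOn G (fun _ => p₀ + t) (Iic p₀) := fun x hx => by
      have hx' : x - p₀ ≤ 0 := by linarith [mem_Iic.1 hx]
      have h0 : prim d.w (x - p₀) = 0 := by
        refine (intervalIntegral.integral_congr (g := fun _ => 0) fun z hz => ?_).trans (by simp)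
        rw [uIcc_of_ge hx'] at hz
        exact hflat z hz.2
      rw [hG, h0]; simp
    rw [iteratedDerivWithin_congr hc self_mem_Iic,
      iteratedDerivWithin_eq_iteratedDeriv (uniqueDiffOn_Iic p₀) contDiffAt_const self_mem_Iic,
      iteratedDeriv_const, if_neg (by omega)]
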